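/- arXiv:2603.21821 — 2 statements merged into one kernel-verified Lean document; each statement's English description precedes it below -/
import Mathlib

section
/- Exact parametrization of the quarter annulus (Example 3): let 0 < r₁ < r₂ and define F : [0,1] × [0,1] → ℝ² by F(t,s) = ((1−s)·r₁ + s·r₂) • C(t). Then F is a bijection from [0,1] × [0,1] onto the quarter annulus Ω = {(x,y) ∈ ℝ² : x ≥ 0, y ≥ 0, r₁² ≤ x² + y² ≤ r₂²}. -/
/-!
The first Bézier segment is the half-angle parametrization of the circle in disguise: with
`a = 1 - u + w u` and `b = (√2/4) u` one has `d₁ = a² + b²` and `n₁ = (a² - b², 2ab)`.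
Hence `P₁ u` lies on the unit circle, and since `b / a = y / (1 + x)` the parameter is recovered
as `u = y / ((√2/4) (1 + x) + (1 - w) y)`. This makes `P₁` a bijection from `[0,1]` onto the arc
`0 ≤ y ≤ x` (`bijOn_P₁`). The second segment is the mirror image, `P₂ u = (P₁ (1 - u)).swap`, and
covers `0 ≤ x ≤ y`; the two halves share only the diagonal point, so `C` is a bijection onto the
quarter circle (`bijOn_C`). The theorem follows by polar decomposition: the norm of a point of the
annulus determines the radius `(1 - s) r₁ + s r₂`, hence `s`, and its direction determines `t`.
-/


noncomputable section

/-- The middle weight `w = (2 + √2)/4` of the quadratic NURBS quarter circle. -/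
def wgt : ℝ := (2 + Real.sqrt 2) / 4

/-- Denominator of the first rational quadratic Bézier segment. -/
def d₁ (u : ℝ) : ℝ := (1 - u) ^ 2 + 2 * u * (1 - u) * wgt + u ^ 2 * wgt

/-- Numerator of the first rational quadratic Bézier segment. -/
def n₁ (u : ℝ) : ℝ × ℝ :=
  (1 - u) ^ 2 • ((1 : ℝ), (0 : ℝ)) +
    (2 * u * (1 - u) * wgt) • ((1 : ℝ), Real.sqrt 2 - 1) +
    (u ^ 2 * wgt) • (Real.sqrt 2 / 2, Real.sqrt 2 / 2)

/-- The first rational quadratic Bézier segment. -/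
def P₁ (u : ℝ) : ℝ × ℝ := (d₁ u)⁻¹ • n₁ u

/-- Denominator of the second rational quadratic Bézier segment. -/
def d₂ (u : ℝ) : ℝ := (1 - u) ^ 2 * wgt + 2 * u * (1 - u) * wgt + u ^ 2

/-- Numerator of the second rational quadratic Bézier segment. -/
def n₂ (u : ℝ) : ℝ × ℝ :=
  ((1 - u) ^ 2 * wgt) • (Real.sqrt 2 / 2, Real.sqrt 2 / 2) +
    (2 * u * (1 - u) * wgt) • (Real.sqrt 2 - 1, (1 : ℝ)) +
    u ^ 2 • ((0 : ℝ), (1 : ℝ))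

/-- The second rational quadratic Bézier segment. -/
def P₂ (u : ℝ) : ℝ × ℝ := (d₂ u)⁻¹ • n₂ u

/-- The quadratic NURBS quarter-circle curve of Example 2, on the knot set
`{0,0,0,1/2,1,1,1}`. -/
def C (t : ℝ) : ℝ × ℝ := if t ≤ 1 / 2 then P₁ (2 * t) else P₂ (2 * t - 1)

end

lemma wgt_lt_one : wgt < 1 := by
  have h : Real.sqrt 2 < 2 := by
    rw [Real.sqrt_lt' (by norm_num)]; norm_num
  unfold wgt; linarith

lemma wgt_pos : 0 < wgt := by unfold wgt; positivity

lemma d₁_eq (u : ℝ) :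
    d₁ u = ((1 - u) + wgt * u) ^ 2 + (Real.sqrt 2 / 4 * u) ^ 2 := by
  have h : Real.sqrt 2 ^ 2 = 2 := Real.sq_sqrt (by norm_num)
  unfold d₁ wgt
  linear_combination (-(u ^ 2) / 8) * h

lemma n₁_fst (u : ℝ) :
    (n₁ u).1 = ((1 - u) + wgt * u) ^ 2 - (Real.sqrt 2 / 4 * u) ^ 2 := by
  have h : Real.sqrt 2 ^ 2 = 2 := Real.sq_sqrt (by norm_num)
  simp only [n₁, wgt, Prod.fst_add, Prod.smul_fst, smul_eq_mul]
  linear_combination (u ^ 2 / 8) * h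

lemma n₁_snd (u : ℝ) :
    (n₁ u).2 = 2 * ((1 - u) + wgt * u) * (Real.sqrt 2 / 4 * u) := by
  have h : Real.sqrt 2 ^ 2 = 2 := Real.sq_sqrt (by norm_num)
  simp only [n₁, wgt, Prod.snd_add, Prod.smul_snd, smul_eq_mul]
  linear_combination (u * (1 - u) / 2) * h

lemma d₁_pos (u : ℝ) : 0 < d₁ u := by
  rw [d₁_eq]
  have h2 : 0 < Real.sqrt 2 := by positivity
  rcases eq_or_ne u 0 with rfl | hu
  · norm_num
  · positivity

lemma P₁_fst (u : ℝ) : (P₁ u).1 = (n₁ u).1 / d₁ u := by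
  simp [P₁, div_eq_inv_mul]

lemma P₁_snd (u : ℝ) : (P₁ u).2 = (n₁ u).2 / d₁ u := by
  simp [P₁, div_eq_inv_mul]

lemma P₁_norm (u : ℝ) : (P₁ u).1 ^ 2 + (P₁ u).2 ^ 2 = 1 := by
  have hd := (d₁_pos u).ne'
  rw [P₁_fst, P₁_snd]
  field_simp
  rw [n₁_fst, n₁_snd, d₁_eq]
  ring

lemma P₁_snd_nonneg {u : ℝ} (h0 : 0 ≤ u) (h1 : u ≤ 1) : 0 ≤ (P₁ u).2 := by
  rw [P₁_snd, n₁_snd]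
  have := d₁_pos u
  have := wgt_pos
  have : 0 ≤ 1 - u := by linarith
  positivity

lemma P₁_diff (u : ℝ) :
    (P₁ u).1 - (P₁ u).2 =
      ((1 - u) ^ 2 + 2 * u * (1 - u) * wgt * (2 - Real.sqrt 2)) / d₁ u := by
  rw [P₁_fst, P₁_snd, ← sub_div]
  congr 1
  simp only [n₁, Prod.snd_add, Prod.smul_snd, Prod.fst_add, Prod.smul_fst, smul_eq_mul]
  ring

lemma P₁_snd_lt_fst {u : ℝ} (h0 : 0 ≤ u) (h1 : u < 1) : (P₁ u).2 < (P₁ u).1 := by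
  rw [← sub_pos, P₁_diff]
  have := d₁_pos u
  have := wgt_pos
  have : 0 < 1 - u := by linarith
  have h : Real.sqrt 2 < 2 := by
    rw [Real.sqrt_lt' (by norm_num)]; norm_num
  have : 0 < 2 - Real.sqrt 2 := by linarith
  positivity

lemma P₁_snd_le_fst {u : ℝ} (h0 : 0 ≤ u) (h1 : u ≤ 1) : (P₁ u).2 ≤ (P₁ u).1 := by
  rcases h1.lt_or_eq with h | rfl
  · exact (P₁_snd_lt_fst h0 h).le
  · rw [← sub_nonneg, P₁_diff]; norm_num

/-- The parameter of a point of the first arc, read off from `tan (θ/2) = y / (1 + x)`. -/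
noncomputable def param (q : ℝ × ℝ) : ℝ :=
  q.2 / (Real.sqrt 2 / 4 * (1 + q.1) + (1 - wgt) * q.2)

lemma param_den_pos {q : ℝ × ℝ} (h0 : 0 ≤ q.2) (h1 : q.2 ≤ q.1) :
    0 < Real.sqrt 2 / 4 * (1 + q.1) + (1 - wgt) * q.2 := by
  have hw : 0 < 1 - wgt := by linarith [wgt_lt_one]
  have : 0 < 1 + q.1 := by linarith
  positivity

lemma param_P₁ {u : ℝ} (h0 : 0 ≤ u) (h1 : u ≤ 1) : param (P₁ u) = u := by
  have hD := param_den_pos (P₁_snd_nonneg h0 h1) (P₁_snd_le_fst h0 h1)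
  rw [param, div_eq_iff hD.ne', P₁_fst, P₁_snd]
  have hd := (d₁_pos u).ne'
  field_simp
  rw [n₁_fst, n₁_snd, d₁_eq]
  ring

/-- The bound `y ≤ (√2 - 1) (1 + x)`, i.e. `tan (θ/2) ≤ tan (π/8)`, keeps the parameter in `[0,1]`. -/
lemma param_mem {q : ℝ × ℝ} (hq : q.1 ^ 2 + q.2 ^ 2 = 1) (h0 : 0 ≤ q.2) (h1 : q.2 ≤ q.1) :
    param q ∈ Set.Icc (0 : ℝ) 1 := by
  have hD := param_den_pos h0 h1
  refine ⟨div_nonneg h0 hD.le, ?_⟩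
  rw [param, div_le_one hD]
  have h : Real.sqrt 2 ^ 2 = 2 := Real.sq_sqrt (by norm_num)
  have hs : 1 < Real.sqrt 2 := by
    rw [Real.lt_sqrt (by norm_num)]; norm_num
  have hs2 : Real.sqrt 2 < 2 := by
    rw [Real.sqrt_lt' (by norm_num)]; norm_num
  have hy : q.2 ≤ Real.sqrt 2 / 2 := by
    refine (sq_le_sq₀ h0 (by positivity)).1 ?_
    nlinarith
  have key : q.2 ≤ (Real.sqrt 2 - 1) * (1 + q.1) := by
    nlinarith [mul_le_mul_of_nonneg_left h1 (sub_nonneg.2 hs.le),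
      mul_le_mul_of_nonneg_left hy (sub_nonneg.2 hs2.le)]
  have key2 := mul_le_mul_of_nonneg_left key wgt_pos.le
  have hw : wgt * (Real.sqrt 2 - 1) = Real.sqrt 2 / 4 := by
    unfold wgt; linear_combination h / 4
  rw [← mul_assoc, hw] at key2
  linarith

lemma P₁_param {q : ℝ × ℝ} (hq : q.1 ^ 2 + q.2 ^ 2 = 1) (h0 : 0 ≤ q.2) (h1 : q.2 ≤ q.1) :
    P₁ (param q) = q := by
  have hD := param_den_pos h0 h1
  obtain ⟨x, y⟩ := q
  simp only at hq h0 h1 hD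
  set D := Real.sqrt 2 / 4 * (1 + x) + (1 - wgt) * y with hDdef
  have hu : param (x, y) = y / D := rfl
  have ha : (1 - param (x, y)) + wgt * param (x, y) = Real.sqrt 2 / 4 * (1 + x) / D := by
    rw [hu]; field_simp; rw [hDdef]; ring
  have hx : 0 < 1 + x := by linarith
  have hs : 0 < Real.sqrt 2 := by positivity
  have hsum : (1 + x) ^ 2 + y ^ 2 ≠ 0 := by positivity
  -- The common factor `√2 / (4 D)` of `a` and `b` cancels in the quotients.
  have hd : d₁ (param (x, y)) = (Real.sqrt 2 / 4 / D) ^ 2 * ((1 + x) ^ 2 + y ^ 2) := by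
    rw [d₁_eq, ha, hu]; ring
  have hk : (Real.sqrt 2 / 4 / D) ^ 2 ≠ 0 := by positivity
  ext
  · rw [P₁_fst, hd, n₁_fst, ha, hu, div_eq_iff (mul_ne_zero hk hsum)]
    linear_combination (-(Real.sqrt 2 / 4 / D) ^ 2 * (1 + x)) * hq
  · rw [P₁_snd, hd, n₁_snd, ha, hu, div_eq_iff (mul_ne_zero hk hsum)]
    linear_combination (-(Real.sqrt 2 / 4 / D) ^ 2 * y) * hq

lemma bijOn_P₁ : Set.BijOn P₁ (Set.Icc 0 1)
    {q : ℝ × ℝ | q.1 ^ 2 + q.2 ^ 2 = 1 ∧ 0 ≤ q.2 ∧ q.2 ≤ q.1} :=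
  Set.InvOn.bijOn (f' := param)
    ⟨fun _ hu => param_P₁ hu.1 hu.2, fun _ hq => P₁_param hq.1 hq.2.1 hq.2.2⟩
    (fun u hu => ⟨P₁_norm u, P₁_snd_nonneg hu.1 hu.2, P₁_snd_le_fst hu.1 hu.2⟩)
    (fun _ hq => param_mem hq.1 hq.2.1 hq.2.2)

lemma P₂_eq (u : ℝ) : P₂ u = (P₁ (1 - u)).swap := by
  have hd : d₂ u = d₁ (1 - u) := by unfold d₁ d₂; ring
  ext
  · simp only [P₁, P₂, hd, n₁, n₂, Prod.snd_add, Prod.smul_snd, Prod.fst_add, Prod.smul_fst,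
      smul_eq_mul, Prod.fst_swap]
    ring
  · simp only [P₁, P₂, hd, n₁, n₂, Prod.snd_add, Prod.smul_snd, Prod.fst_add, Prod.smul_fst,
      smul_eq_mul, Prod.snd_swap]
    ring

lemma C_of_le {t : ℝ} (h : t ≤ 1 / 2) : C t = P₁ (2 * t) := if_pos h

lemma C_of_gt {t : ℝ} (h : 1 / 2 < t) : C t = (P₁ (2 * (1 - t))).swap := by
  rw [C, if_neg h.not_ge, P₂_eq]
  congr 2; ring

lemma bijOn_C : Set.BijOn C (Set.Icc 0 1)
    {q : ℝ × ℝ | q.1 ^ 2 + q.2 ^ 2 = 1 ∧ 0 ≤ q.1 ∧ 0 ≤ q.2} := by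
  have hlo : ∀ t : ℝ, 0 ≤ t → t ≤ 1 / 2 → (C t).2 ≤ (C t).1 := fun t h0 h => by
    rw [C_of_le h]; exact P₁_snd_le_fst (by linarith) (by linarith)
  have hhi : ∀ t : ℝ, t ≤ 1 → 1 / 2 < t → (C t).1 < (C t).2 := fun t h1 h => by
    rw [C_of_gt h]; exact P₁_snd_lt_fst (by linarith) (by linarith)
  refine ⟨?_, ?_, ?_⟩
  · rintro t ⟨h0, h1⟩
    rcases le_or_gt t (1 / 2) with h | h
    · have hn := P₁_snd_nonneg (u := 2 * t) (by linarith) (by linarith)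
      rw [C_of_le h]
      exact ⟨P₁_norm _, hn.trans (P₁_snd_le_fst (by linarith) (by linarith)), hn⟩
    · have hn := P₁_snd_nonneg (u := 2 * (1 - t)) (by linarith) (by linarith)
      rw [C_of_gt h]
      exact ⟨(add_comm _ _).trans (P₁_norm _), hn,
        hn.trans (P₁_snd_le_fst (by linarith) (by linarith))⟩
  · rintro t ⟨h0, h1⟩ t' ⟨h0', h1'⟩ he
    rcases le_or_gt t (1 / 2) with h | h <;> rcases le_or_gt t' (1 / 2) with h' | h'
    · rw [C_of_le h, C_of_le h'] at he
      have := bijOn_P₁.injOn (x₁ := 2 * t) (x₂ := 2 * t')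
        ⟨by linarith, by linarith⟩ ⟨by linarith, by linarith⟩ he
      linarith
    · have a := hlo t h0 h
      rw [he] at a
      exact absurd a (hhi t' h1' h').not_ge
    · have a := hlo t' h0' h'
      rw [← he] at a
      exact absurd a (hhi t h1 h).not_ge
    · rw [C_of_gt h, C_of_gt h'] at he
      have := bijOn_P₁.injOn (x₁ := 2 * (1 - t)) (x₂ := 2 * (1 - t'))
        ⟨by linarith, by linarith⟩ ⟨by linarith, by linarith⟩ (Prod.swap_injective he)
      linarith
  · rintro q ⟨hq, hx, hy⟩
    rcases le_or_gt q.2 q.1 with h | h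
    · obtain ⟨u, ⟨hu0, hu1⟩, rfl⟩ := bijOn_P₁.surjOn ⟨hq, hy, h⟩
      refine ⟨u / 2, ⟨by linarith, by linarith⟩, ?_⟩
      rw [C_of_le (by linarith)]
      congr 1; ring
    · obtain ⟨u, ⟨hu0, hu1⟩, hu⟩ :=
        bijOn_P₁.surjOn (a := q.swap) ⟨(add_comm _ _).trans hq, hx, h.le⟩
      -- Off the diagonal `u ≠ 1`, so the parameter `1 - u/2` falls in the second branch of `C`.
      have hu1' : u < 1 := by
        refine lt_of_le_of_ne hu1 ?_
        rintro rfl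
        have hdiag := P₁_diff 1
        rw [hu] at hdiag
        norm_num at hdiag
        linarith
      refine ⟨1 - u / 2, ⟨by linarith, by linarith⟩, ?_⟩
      rw [C_of_gt (by linarith), show 2 * (1 - (1 - u / 2)) = u by ring, hu, Prod.swap_swap]

/-- Exact parametrization of the quarter annulus (Example 3): for `0 < r₁ < r₂`,
the map `F(t,s) = ((1−s)·r₁ + s·r₂) • C t` is a bijection from `[0,1] × [0,1]`
onto the quarter annulus `{(x,y) : x ≥ 0, y ≥ 0, r₁² ≤ x² + y² ≤ r₂²}`. -/
theorem stmt_15 (r₁ r₂ : ℝ) (h₁ : 0 < r₁) (h₁₂ : r₁ < r₂) :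
    Set.BijOn (fun p : ℝ × ℝ => ((1 - p.2) * r₁ + p.2 * r₂) • C p.1)
      (Set.Icc 0 1 ×ˢ Set.Icc 0 1)
      {q : ℝ × ℝ | 0 ≤ q.1 ∧ 0 ≤ q.2 ∧
        r₁ ^ 2 ≤ q.1 ^ 2 + q.2 ^ 2 ∧ q.1 ^ 2 + q.2 ^ 2 ≤ r₂ ^ 2} := by
  have hr : ∀ s : ℝ, 0 ≤ s → s ≤ 1 →
      r₁ ≤ (1 - s) * r₁ + s * r₂ ∧ (1 - s) * r₁ + s * r₂ ≤ r₂ := fun s h0 h1 =>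
    ⟨by nlinarith, by nlinarith⟩
  refine ⟨?_, ?_, ?_⟩
  · rintro ⟨t, s⟩ ⟨ht, hs0, hs1⟩
    obtain ⟨hC, hx, hy⟩ := bijOn_C.mapsTo ht
    obtain ⟨ha, hb⟩ := hr s hs0 hs1
    simp only [Set.mem_ofPred_eq, Prod.smul_fst, Prod.smul_snd, smul_eq_mul]
    set ρ := (1 - s) * r₁ + s * r₂
    have hρ : 0 < ρ := h₁.trans_le ha
    have hn : (ρ * (C t).1) ^ 2 + (ρ * (C t).2) ^ 2 = ρ ^ 2 := by
      linear_combination ρ ^ 2 * hC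
    rw [hn]
    exact ⟨by positivity, by positivity, by gcongr, by gcongr⟩
  · rintro ⟨t, s⟩ ⟨ht, hs0, hs1⟩ ⟨t', s'⟩ ⟨ht', hs0', hs1'⟩ he
    obtain ⟨hC, -, -⟩ := bijOn_C.mapsTo ht
    obtain ⟨hC', -, -⟩ := bijOn_C.mapsTo ht'
    have ha := (hr s hs0 hs1).1
    have ha' := (hr s' hs0' hs1').1
    simp only at he ht ht' hC hC' ha ha'
    have hρ : (1 - s) * r₁ + s * r₂ = (1 - s') * r₁ + s' * r₂ := by
      have e1 := congrArg Prod.fst he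
      have e2 := congrArg Prod.snd he
      simp only [Prod.smul_fst, Prod.smul_snd, smul_eq_mul] at e1 e2
      generalize (1 - s) * r₁ + s * r₂ = ρ at *
      generalize (1 - s') * r₁ + s' * r₂ = ρ' at *
      have hsq : ρ ^ 2 = ρ' ^ 2 := by
        linear_combination (-ρ ^ 2) * hC + ρ' ^ 2 * hC' + (ρ * (C t).1 + ρ' * (C t').1) * e1 +
          (ρ * (C t).2 + ρ' * (C t').2) * e2
      exact (sq_eq_sq₀ (by linarith) (by linarith)).1 hsq
    have hs : s = s' := by
      have : (r₂ - r₁) * s = (r₂ - r₁) * s' := by linear_combination hρ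
      exact mul_left_cancel₀ (sub_pos.2 h₁₂).ne' this
    rw [← hρ] at he
    have ht_eq := bijOn_C.injOn ht ht' (smul_right_injective _ (h₁.trans_le ha).ne' he)
    rw [hs, ht_eq]
  · rintro q ⟨hx, hy, hlo, hhi⟩
    set ρ := Real.sqrt (q.1 ^ 2 + q.2 ^ 2) with hρdef
    have hρsq : ρ ^ 2 = q.1 ^ 2 + q.2 ^ 2 := Real.sq_sqrt (by positivity)
    have ha : r₁ ≤ ρ := Real.le_sqrt_of_sq_le hlo
    have hb : ρ ≤ r₂ := Real.sqrt_le_iff.2 ⟨by linarith, hhi⟩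
    have hρ : 0 < ρ := h₁.trans_le ha
    obtain ⟨t, ht, hCt⟩ := bijOn_C.surjOn (a := ρ⁻¹ • q) ⟨by
      simp only [Prod.smul_fst, Prod.smul_snd, smul_eq_mul]
      field_simp
      exact hρsq.symm, mul_nonneg (by positivity) hx, mul_nonneg (by positivity) hy⟩
    have hδ : 0 < r₂ - r₁ := sub_pos.2 h₁₂
    refine ⟨(t, (ρ - r₁) / (r₂ - r₁)), ⟨ht, div_nonneg (by linarith) hδ.le,
      (div_le_one hδ).2 (by linarith)⟩, ?_⟩
    have hrad : (1 - (ρ - r₁) / (r₂ - r₁)) * r₁ + (ρ - r₁) / (r₂ - r₁) * r₂ = ρ := by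
      field_simp
      ring
    simp only [hrad, hCt]
    exact smul_inv_smul₀ hρ.ne' q
end

section
/- Exact parametrization of the quarter cylinder shell (Example 4): let r > 0 and h > 0 and define G : [0,1] × [0,1] → ℝ³ by G(t,s) = (r·C(t)₁, r·C(t)₂, s·h), where C(t)₁, C(t)₂ are the coordinates of C(t). Then G is a bijection from [0,1] × [0,1] onto the quarter cylinder Ω = {(x,y,z) ∈ ℝ³ : x² + y² = r², x ≥ 0, y ≥ 0, 0 ≤ z ≤ h}. -/
/-- The point of the unit circle whose polar angle has half-angle tangent `m`. -/
noncomputable def circlePt (m : ℝ) : ℝ × ℝ := ((1 - m ^ 2) / (1 + m ^ 2), 2 * m / (1 + m ^ 2))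

/-- The tangent of half the polar angle of `C t`, for `t ∈ [0, 1]`. -/
noncomputable def halfTan (t : ℝ) : ℝ :=
  if t ≤ 1 / 2 then (√2 / 2 * t) / (1 - (2 - √2) / 2 * t)
  else t / (1 + (1 - t) * (√2 - 1))

lemma sqrt_two_bounds : √2 ^ 2 = 2 ∧ 1.4 < √2 ∧ √2 < 1.5 :=
  ⟨Real.sq_sqrt (by norm_num), Real.lt_sqrt_of_sq_lt (by norm_num),
    (Real.sqrt_lt' (by norm_num)).2 (by norm_num)⟩

lemma circlePt_div {A B : ℝ} (hA : A ≠ 0) :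
    circlePt (B / A) = ((A ^ 2 - B ^ 2) / (A ^ 2 + B ^ 2), 2 * A * B / (A ^ 2 + B ^ 2)) := by
  have h1 : A ^ 2 + B ^ 2 ≠ 0 := by positivity
  have h2 : 1 + (B / A) ^ 2 ≠ 0 := by positivity
  unfold circlePt
  ext
  · simp only
    rw [div_eq_div_iff h2 h1]
    field_simp
  · simp only
    rw [div_eq_div_iff h2 h1]
    field_simp

lemma C_eq_circlePt {t : ℝ} (ht : t ∈ Set.Icc (0 : ℝ) 1) : C t = circlePt (halfTan t) := by
  obtain ⟨hs, hl, hu⟩ := sqrt_two_bounds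
  obtain ⟨h0, h1⟩ := ht
  unfold C halfTan
  split_ifs with h
  · have hA : 0 < 1 - (2 - √2) / 2 * t := by nlinarith
    rw [circlePt_div hA.ne']
    have hd : d₁ (2 * t) = (1 - (2 - √2) / 2 * t) ^ 2 + (√2 / 2 * t) ^ 2 := by
      unfold d₁ wgt
      linear_combination (-1 / 2 * t ^ 2) * hs
    have hx : (n₁ (2 * t)).1 = (1 - (2 - √2) / 2 * t) ^ 2 - (√2 / 2 * t) ^ 2 := by
      simp only [n₁, wgt, Prod.fst_add, Prod.smul_fst, smul_eq_mul]
      linear_combination (1 / 2 * t ^ 2) * hs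
    have hy : (n₁ (2 * t)).2 = 2 * (1 - (2 - √2) / 2 * t) * (√2 / 2 * t) := by
      simp only [n₁, wgt, Prod.snd_add, Prod.smul_snd, smul_eq_mul]
      linear_combination (t - 2 * t ^ 2) * hs
    rw [P₁, hd]
    ext
    · rw [Prod.smul_fst, hx, smul_eq_mul, ← div_eq_inv_mul]
    · rw [Prod.smul_snd, hy, smul_eq_mul, ← div_eq_inv_mul]
  · have hA : 0 < 1 + (1 - t) * (√2 - 1) := by nlinarith
    rw [circlePt_div hA.ne']
    -- The factors `1 / 2` come from the reflection: for the linear forms `A`, `B` of the mirrored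
    -- first segment, `(A + B)² + (A - B)² = 2 (A² + B²)`.
    have hd : d₂ (2 * t - 1) = ((1 + (1 - t) * (√2 - 1)) ^ 2 + t ^ 2) / 2 := by
      unfold d₂ wgt
      linear_combination (-1 / 2 * (1 - t) ^ 2) * hs
    have hx : (n₂ (2 * t - 1)).1 = ((1 + (1 - t) * (√2 - 1)) ^ 2 - t ^ 2) / 2 := by
      simp only [n₂, wgt, Prod.fst_add, Prod.smul_fst, smul_eq_mul]
      linear_combination (-(1 - 3 * t + 2 * t ^ 2)) * hs
    have hy : (n₂ (2 * t - 1)).2 = (2 * (1 + (1 - t) * (√2 - 1)) * t) / 2 := by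
      simp only [n₂, wgt, Prod.snd_add, Prod.smul_snd, smul_eq_mul]
      linear_combination (1 / 2 * (1 - t) ^ 2) * hs
    have hp : (1 + (1 - t) * (√2 - 1)) ^ 2 + t ^ 2 ≠ 0 := by positivity
    rw [P₂, hd]
    ext
    · rw [Prod.smul_fst, hx, smul_eq_mul]
      field_simp
    · rw [Prod.smul_snd, hy, smul_eq_mul]
      field_simp

lemma halfTan_bijOn : Set.BijOn halfTan (Set.Icc 0 1) (Set.Icc 0 1) := by
  obtain ⟨hs, hl, hu⟩ := sqrt_two_bounds
  have hA : ∀ t : ℝ, t ≤ 1 / 2 → 0 < 1 - (2 - √2) / 2 * t := fun t ht => by nlinarith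
  have hA' : ∀ t : ℝ, t ≤ 1 → 0 < 1 + (1 - t) * (√2 - 1) := fun t ht => by nlinarith
  -- Both pieces take the value `√2 - 1 = tan (π / 8)` at the knot `1 / 2`, which separates them.
  have hlow : ∀ t : ℝ, t ≤ 1 / 2 → (√2 / 2 * t) / (1 - (2 - √2) / 2 * t) ≤ √2 - 1 :=
    fun t ht => by
      rw [div_le_iff₀ (hA t ht)]
      nlinarith
  have hhigh : ∀ t : ℝ, 1 / 2 < t → t ≤ 1 → √2 - 1 < t / (1 + (1 - t) * (√2 - 1)) :=
    fun t ht ht1 => by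
      rw [lt_div_iff₀ (hA' t ht1)]
      nlinarith
  refine ⟨?_, ?_, ?_⟩
  · rintro t ⟨h0, h1⟩
    unfold halfTan
    split_ifs with h
    · have := hA t h
      exact ⟨by positivity, (hlow t h).trans (by linarith)⟩
    · push Not at h
      refine ⟨(by linarith : 0 ≤ √2 - 1).trans (hhigh t h h1).le, ?_⟩
      rw [div_le_one (hA' t h1)]
      nlinarith
  · rintro t ⟨h0, h1⟩ t' ⟨h0', h1'⟩ he
    unfold halfTan at he
    split_ifs at he with h h' h'
    · rw [div_eq_div_iff (hA t h).ne' (hA t' h').ne'] at he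
      have : √2 * (t - t') = 0 := by linear_combination 2 * he
      rcases mul_eq_zero.1 this with h2 | h2 <;> linarith
    · linarith [hlow t h, hhigh t' (not_le.1 h') h1']
    · linarith [hlow t' h', hhigh t (not_le.1 h) h1]
    · rw [div_eq_div_iff (hA' t h1).ne' (hA' t' h1').ne'] at he
      have : √2 * (t - t') = 0 := by linear_combination he
      rcases mul_eq_zero.1 this with h2 | h2 <;> linarith
  · rintro m ⟨h0, h1⟩
    by_cases hm : m ≤ √2 - 1
    -- Solve `(√2 / 2) t = m (1 - (2 - √2) / 2 · t)` for `t`.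
    · have hD : 0 < √2 / 2 + m * ((2 - √2) / 2) := by nlinarith
      have ht : m / (√2 / 2 + m * ((2 - √2) / 2)) ≤ 1 / 2 := by
        rw [div_le_iff₀ hD]
        nlinarith
      refine ⟨m / (√2 / 2 + m * ((2 - √2) / 2)), ⟨by positivity, by linarith⟩, ?_⟩
      unfold halfTan
      rw [if_pos ht, div_eq_iff (hA _ ht).ne']
      have hq := div_mul_cancel₀ m hD.ne'
      linear_combination hq
    -- Solve `t = m (1 + (1 - t) (√2 - 1))` for `t`.
    · push Not at hm
      have hD : 0 < 1 + m * (√2 - 1) := by nlinarith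
      have ht : ¬ m * √2 / (1 + m * (√2 - 1)) ≤ 1 / 2 := by
        rw [not_le, lt_div_iff₀ hD]
        nlinarith
      have ht1 : m * √2 / (1 + m * (√2 - 1)) ≤ 1 := by
        rw [div_le_one hD]
        nlinarith
      refine ⟨m * √2 / (1 + m * (√2 - 1)), ⟨by positivity, ht1⟩, ?_⟩
      unfold halfTan
      rw [if_neg ht, div_eq_iff (hA' _ ht1).ne']
      field_simp
      ring

lemma circlePt_bijOn : Set.BijOn circlePt (Set.Icc 0 1)
    {p : ℝ × ℝ | p.1 ^ 2 + p.2 ^ 2 = 1 ∧ 0 ≤ p.1 ∧ 0 ≤ p.2} := by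
  refine Set.InvOn.bijOn (f' := fun p => p.2 / (1 + p.1)) ⟨?_, ?_⟩ ?_ ?_
  · rintro m -
    have : 0 < 1 + m ^ 2 := by positivity
    simp only [circlePt]
    have h2 : 1 + (1 - m ^ 2) / (1 + m ^ 2) = 2 / (1 + m ^ 2) := by
      field_simp
      ring
    rw [h2]
    field_simp
  · rintro ⟨x, y⟩ ⟨he, hx, hy⟩
    simp only at he hx hy ⊢
    have h1 : 0 < 1 + x := by linarith
    have h2 : (1 + x) ^ 2 + y ^ 2 ≠ 0 := by positivity
    rw [circlePt_div h1.ne']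
    ext
    · simp only
      rw [div_eq_iff h2]
      linear_combination (-(1 + x)) * he
    · simp only
      rw [div_eq_iff h2]
      linear_combination (-y) * he
  · rintro m ⟨h0, h1⟩
    have : 0 < 1 + m ^ 2 := by positivity
    refine ⟨?_, ?_, ?_⟩
    · simp only [circlePt]
      field_simp
      ring
    · exact div_nonneg (by nlinarith) this.le
    · exact div_nonneg (by linarith) this.le
  · rintro ⟨x, y⟩ ⟨he, hx, hy⟩
    simp only at he hx hy
    refine ⟨div_nonneg hy (by simp only; linarith), ?_⟩
    simp only
    rw [div_le_one (by linarith)]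
    nlinarith

lemma C_bijOn : Set.BijOn C (Set.Icc 0 1)
    {p : ℝ × ℝ | p.1 ^ 2 + p.2 ^ 2 = 1 ∧ 0 ≤ p.1 ∧ 0 ≤ p.2} :=
  (circlePt_bijOn.comp halfTan_bijOn).congr fun _ ht => (C_eq_circlePt ht).symm


/-- Exact parametrization of the quarter cylinder shell (Example 4): for
`r > 0`, `h > 0`, the map `G(t,s) = (r·C(t)₁, r·C(t)₂, s·h)` is a bijection from
`[0,1] × [0,1]` onto `{(x,y,z) : x² + y² = r², x ≥ 0, y ≥ 0, 0 ≤ z ≤ h}`. -/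
theorem stmt_16 (r h : ℝ) (hr : 0 < r) (hh : 0 < h) :
    Set.BijOn (fun p : ℝ × ℝ => ((r * (C p.1).1, r * (C p.1).2, p.2 * h) : ℝ × ℝ × ℝ))
      (Set.Icc 0 1 ×ˢ Set.Icc 0 1)
      {q : ℝ × ℝ × ℝ | q.1 ^ 2 + q.2.1 ^ 2 = r ^ 2 ∧ 0 ≤ q.1 ∧ 0 ≤ q.2.1 ∧
        0 ≤ q.2.2 ∧ q.2.2 ≤ h} := by
  refine ⟨?_, ?_, ?_⟩
  · rintro ⟨t, s⟩ ⟨ht, hs0, hs1⟩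
    obtain ⟨he, hx, hy⟩ := C_bijOn.mapsTo ht
    simp only at hs0 hs1
    refine ⟨?_, mul_nonneg hr.le hx, mul_nonneg hr.le hy, mul_nonneg hs0 hh.le, ?_⟩
    · simp only
      linear_combination r ^ 2 * he
    · exact mul_le_of_le_one_left hh.le hs1
  · rintro ⟨t, s⟩ ⟨ht, -⟩ ⟨t', s'⟩ ⟨ht', -⟩ he
    simp only [Prod.mk.injEq, mul_right_inj' hr.ne', mul_left_inj' hh.ne'] at he
    exact Prod.ext (C_bijOn.injOn ht ht' (Prod.ext he.1 he.2.1)) he.2.2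
  · rintro ⟨x, y, z⟩ ⟨he, hx, hy, hz0, hz1⟩
    simp only at he hx hy hz0 hz1
    have hm : (x / r, y / r) ∈ {p : ℝ × ℝ | p.1 ^ 2 + p.2 ^ 2 = 1 ∧ 0 ≤ p.1 ∧ 0 ≤ p.2} := by
      refine ⟨?_, div_nonneg hx hr.le, div_nonneg hy hr.le⟩
      simp only
      field_simp
      exact he
    obtain ⟨t, ht, hC⟩ := C_bijOn.surjOn hm
    refine ⟨(t, z / h), ⟨ht, div_nonneg hz0 hh.le, (div_le_one hh).2 hz1⟩, ?_⟩
    simp only [hC]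
    rw [mul_div_cancel₀ _ hr.ne', mul_div_cancel₀ _ hr.ne', div_mul_cancel₀ _ hh.ne']
end
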